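/- For all α, β > -1, all t > 0 and all θ, φ ∈ [0,π], the Jacobi-Poisson type kernel 𝓗_t^{α,β}(θ,φ) admits the integral representation 𝓗_t^{α,β}(θ,φ) = 4 ∫∫_{(0,1]×(0,1]} [Ψ_E^{α,β}(t,θ,φ,u,v) − Ψ_E^{α,β}(t,θ,φ,u,1) − Ψ_E^{α,β}(t,θ,φ,1,v) + Ψ_E^{α,β}(t,θ,φ,1,1)] dΠ_α(u) dΠ_β(v) + 2 ∫_{(0,1]} [Ψ_E^{α,β}(t,θ,φ,u,1) − Ψ_E^{α,β}(t,θ,φ,1,1)] dΠ_α(u) + 2 ∫_{(0,1]} [Ψ_E^{α,β}(t,θ,φ,1,v) − Ψ_E^{α,β}(t,θ,φ,1,1)] dΠ_β(v) + Ψ_E^{α,β}(t,θ,φ,1,1), where all the integrals converge absolutely (the integrands vanish at least to first order in (1−u) and in (1−v) as u → 1 and v → 1). -/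

import Mathlib

open MeasureTheory Real Set
open scoped ENNReal Classical

noncomputable def cab (α β : ℝ) : ℝ :=
  Real.Gamma (α + β + 2) / (2 ^ (α + β + 1) * Real.Gamma (α + 1) * Real.Gamma (β + 1))

noncomputable def F4 (a₁ a₂ b₁ b₂ x y : ℝ) : ℝ :=
  ∑' p : ℕ × ℕ,
    (Polynomial.eval a₁ (ascPochhammer ℝ (p.1 + p.2)) *
      Polynomial.eval a₂ (ascPochhammer ℝ (p.1 + p.2))) /
    (Polynomial.eval b₁ (ascPochhammer ℝ p.1) * Polynomial.eval b₂ (ascPochhammer ℝ p.2) *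
      (Nat.factorial p.1) * (Nat.factorial p.2)) * x ^ p.1 * y ^ p.2

noncomputable def Hker (α β t θ φ : ℝ) : ℝ :=
  cab α β * Real.sinh (t / 2) / Real.cosh (t / 2) ^ (α + β + 2) *
    F4 ((α + β + 2) / 2) ((α + β + 3) / 2) (α + 1) (β + 1)
      ((Real.sin (θ / 2) * Real.sin (φ / 2) / Real.cosh (t / 2)) ^ 2)
      ((Real.cos (θ / 2) * Real.cos (φ / 2) / Real.cosh (t / 2)) ^ 2)

noncomputable def qf (θ φ u v : ℝ) : ℝ :=
  1 - u * Real.sin (θ / 2) * Real.sin (φ / 2) - v * Real.cos (θ / 2) * Real.cos (φ / 2)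

noncomputable def Psi (α β t θ φ u v : ℝ) : ℝ :=
  cab α β * Real.sinh (t / 2) / (Real.cosh (t / 2) - 1 + qf θ φ u v) ^ (α + β + 2)

noncomputable def PsiE (α β t θ φ u v : ℝ) : ℝ :=
  (Psi α β t θ φ u v + Psi α β t θ φ (-u) v + Psi α β t θ φ u (-v) +
    Psi α β t θ φ (-u) (-v)) / 4

noncomputable def PiMeas (ν : ℝ) : Measure ℝ :=
  if ν = -(1/2) then (2⁻¹ : ℝ≥0∞) • (Measure.dirac (-1) + Measure.dirac 1)
  else (volume.restrict (Icc (-1 : ℝ) 1)).withDensity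
    (fun u => ENNReal.ofReal
      (Real.Gamma (ν + 1) / (Real.sqrt π * Real.Gamma (ν + 1/2)) * (1 - u ^ 2) ^ (ν - 1/2)))

noncomputable def PiFun (γ u : ℝ) : ℝ :=
  Real.Gamma (γ + 1) / (Real.sqrt π * Real.Gamma (γ + 1/2)) *
    ∫ w in (0 : ℝ)..u, (1 - w ^ 2) ^ (γ - 1/2)

noncomputable def PiInt (ν : ℝ) (S : Set ℝ) (f : ℝ → ℝ) : ℝ :=
  if ν = -(1/2) then
    ((if (-1 : ℝ) ∈ S then f (-1) else 0) + (if (1 : ℝ) ∈ S then f 1 else 0)) / 2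
  else ∫ u in S, f u *
    (Real.Gamma (ν + 1) / (Real.sqrt π * Real.Gamma (ν + 1/2)) * (1 - u ^ 2) ^ (ν - 1/2))

noncomputable def muab (α β : ℝ) : Measure ℝ :=
  (volume.restrict (Icc (0 : ℝ) π)).withDensity
    (fun θ => ENNReal.ofReal (Real.sin (θ / 2) ^ (2 * α + 1) * Real.cos (θ / 2) ^ (2 * β + 1)))

def ballI (θ r : ℝ) : Set ℝ := Ioo (θ - r) (θ + r) ∩ Icc 0 π

/-!
Put `X = sin (θ/2) sin (φ/2) / cosh (t/2)` and `Y = cos (θ/2) cos (φ/2) / cosh (t/2)`. Up to a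
factor independent of `u` and `v`, `Psi` is `(1 - u X - v Y) ^ (-(α + β + 2))`, so its double
binomial series expands `PsiE` in the monomials `u ^ (2 m) * v ^ (2 n)`. The compensated integral
`2 ∫ (u ^ (2 n) - 1) dΠ_ν` over `(0, 1]` equals `(1/2)_n / (ν + 1)_n - 1` for every `ν > -1`: the
differences of consecutive monomials carry a factor `1 - u ^ 2`, which turns the weight into that
of a convergent Beta integral. Write `M` and `N` for the moments `(1/2)_m / (α + 1)_m` and
`(1/2)_n / (β + 1)_n`. The four terms of the representation correspond to the summands of
`M N = (M - 1) (N - 1) + (M - 1) + (N - 1) + 1`, and the duplication formula for Pochhammer symbols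
identifies `M N` times the binomial coefficient with the coefficient of `F4`.
-/

theorem abs_ascPochhammer_eval_le (a : ℝ) (n : ℕ) :
    |(ascPochhammer ℝ n).eval a| ≤ (ascPochhammer ℝ n).eval |a| := by
  induction n with
  | zero => simp
  | succ n ih =>
    rw [ascPochhammer_succ_eval, ascPochhammer_succ_eval, abs_mul]
    have hfactor : |a + n| ≤ |a| + n := (abs_add_le a n).trans_eq (by rw [Nat.abs_cast])
    exact mul_le_mul ih hfactor (abs_nonneg _) ((abs_nonneg _).trans ih)

theorem ascPochhammer_eval_two_mul {𝕜 : Type*} [Field 𝕜] [CharZero 𝕜] (a : 𝕜) (n : ℕ) :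
    (ascPochhammer 𝕜 (2 * n)).eval a =
      4 ^ n * ((ascPochhammer 𝕜 n).eval (a / 2) * (ascPochhammer 𝕜 n).eval ((a + 1) / 2)) := by
  induction n with
  | zero => simp
  | succ n ih =>
    simp only [mul_add, mul_one, ascPochhammer_succ_eval, ih]
    push_cast
    ring

theorem cast_factorial_two_mul {𝕜 : Type*} [Field 𝕜] [CharZero 𝕜] (n : ℕ) :
    ((2 * n).factorial : 𝕜) = 4 ^ n * ((ascPochhammer 𝕜 n).eval (1 / 2) * n.factorial) := by
  simpa [ascPochhammer_eval_one] using ascPochhammer_eval_two_mul (1 : 𝕜) n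

theorem Gamma_add_natCast {a : ℝ} (ha : 0 < a) (n : ℕ) :
    Gamma (a + n) = (ascPochhammer ℝ n).eval a * Gamma a := by
  induction n with
  | zero => simp
  | succ n ih =>
    rw [Nat.cast_succ, ← add_assoc, Gamma_add_one (by positivity), ih, ascPochhammer_succ_eval]
    ring

-- At `s = 0` this reads `1 / 0 = 0`, as `Gamma 0 = 0` by convention.
theorem Gamma_add_one_div_Gamma {s : ℝ} (hs : ∀ m : ℕ, s ≠ -(m + 1)) :
    Gamma (s + 1) / Gamma s = s := by
  rcases eq_or_ne s 0 with rfl | h0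
  · simp [Gamma_zero]
  · rw [Gamma_add_one h0, mul_div_cancel_right₀ _ (Gamma_ne_zero fun m => ?_)]
    rcases m with _ | m
    · simpa using h0
    · exact_mod_cast hs m

/-! ### Double power series -/

theorem hasSum_one_div_one_sub_rpow (a : ℝ) {x : ℝ} (hx : |x| < 1) :
    HasSum (fun n : ℕ => (ascPochhammer ℝ n).eval a / n.factorial * x ^ n)
      (1 / (1 - x) ^ a) := by
  have h := (Real.one_div_one_sub_rpow_hasFPowerSeriesOnBall_zero a).hasSum
    (y := x) (by simpa [enorm_eq_nnnorm, ← NNReal.coe_lt_one] using hx)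
  have hchoose (n : ℕ) :
      Ring.choose (a + n - 1) n = (ascPochhammer ℝ n).eval a / n.factorial := by
    rw [Ring.choose, show a + n - 1 - n + 1 = a by ring, eq_div_iff (by positivity), mul_comm,
      ← nsmul_eq_mul, Ring.factorial_nsmul_multichoose_eq_ascPochhammer,
      Polynomial.ascPochhammer_smeval_eq_eval]
  simpa [hchoose, FormalMultilinearSeries.ofScalars] using h

/-- The Taylor coefficients at the origin of `(x, y) ↦ (1 - x - y) ^ (-a)`. -/
noncomputable def negBinomialCoeff (a : ℝ) (p : ℕ × ℕ) : ℝ :=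
  (ascPochhammer ℝ (p.1 + p.2)).eval a / (p.1.factorial * p.2.factorial)

theorem abs_negBinomialCoeff_le (a : ℝ) (p : ℕ × ℕ) :
    |negBinomialCoeff a p| ≤ negBinomialCoeff |a| p := by
  rw [negBinomialCoeff, negBinomialCoeff, abs_div,
    abs_of_nonneg (by positivity : (0 : ℝ) ≤ p.1.factorial * p.2.factorial)]
  gcongr
  exact abs_ascPochhammer_eval_le a _

theorem sum_antidiagonal_negBinomialCoeff (a x y : ℝ) (n : ℕ) :
    ∑ p ∈ Finset.HasAntidiagonal.antidiagonal n, negBinomialCoeff a p * x ^ p.1 * y ^ p.2 =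
      (ascPochhammer ℝ n).eval a / n.factorial * (x + y) ^ n := by
  rw [(Commute.all x y).add_pow', Finset.mul_sum]
  refine Finset.sum_congr rfl fun p hp => ?_
  obtain rfl := Finset.HasAntidiagonal.mem_antidiagonal.1 hp
  rw [nsmul_eq_mul, Nat.cast_add_choose, negBinomialCoeff]
  field_simp

theorem hasSum_negBinomialCoeff_antidiagonal (a : ℝ) {x y : ℝ} (h : |x + y| < 1) :
    HasSum (fun n : ℕ => ∑' p : Finset.HasAntidiagonal.antidiagonal n,
      negBinomialCoeff a p.1 * x ^ p.1.1 * y ^ p.1.2) (1 / (1 - x - y) ^ a) := by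
  rw [sub_sub]
  refine (hasSum_one_div_one_sub_rpow a h).congr_fun fun n => ?_
  rw [tsum_fintype, ← sum_antidiagonal_negBinomialCoeff]
  exact Finset.sum_coe_sort _ fun p : ℕ × ℕ => negBinomialCoeff a p * x ^ p.1 * y ^ p.2

theorem summable_negBinomialCoeff (a : ℝ) {x y : ℝ} (h : |x| + |y| < 1) :
    Summable fun p : ℕ × ℕ => negBinomialCoeff a p * x ^ p.1 * y ^ p.2 := by
  have hcoeff (p : ℕ × ℕ) : 0 ≤ negBinomialCoeff |a| p :=
    (abs_nonneg _).trans (abs_negBinomialCoeff_le a p)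
  have hmajorant : Summable fun p : ℕ × ℕ => negBinomialCoeff |a| p * |x| ^ p.1 * |y| ^ p.2 := by
    rw [← Finset.HasAntidiagonal.sigmaAntidiagonalEquivProd.summable_iff, summable_sigma_of_nonneg]
    · exact ⟨fun n => (hasSum_fintype _).summable, (hasSum_negBinomialCoeff_antidiagonal |a|
        (by rwa [abs_of_nonneg (by positivity)])).summable⟩
    · exact fun p => mul_nonneg (mul_nonneg (hcoeff _) (pow_nonneg (abs_nonneg x) _))
        (pow_nonneg (abs_nonneg y) _)
  refine hmajorant.of_norm_bounded fun p => ?_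
  rw [norm_mul, norm_mul, norm_pow, norm_pow, norm_eq_abs, norm_eq_abs, norm_eq_abs]
  gcongr
  exact abs_negBinomialCoeff_le a p

theorem hasSum_negBinomialCoeff (a : ℝ) {x y : ℝ} (h : |x| + |y| < 1) :
    HasSum (fun p : ℕ × ℕ => negBinomialCoeff a p * x ^ p.1 * y ^ p.2)
      (1 / (1 - x - y) ^ a) := by
  have hs := summable_negBinomialCoeff a h
  have hsigma := (Finset.HasAntidiagonal.sigmaAntidiagonalEquivProd.hasSum_iff.2 hs.hasSum).sigma
    fun n => (hasSum_fintype _).summable.hasSum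
  rw [← hsigma.unique (hasSum_negBinomialCoeff_antidiagonal a ((abs_add_le x y).trans_lt h))]
  exact hs.hasSum

theorem injective_two_mul_prod : Function.Injective fun p : ℕ × ℕ => (2 * p.1, 2 * p.2) :=
  (mul_right_injective₀ two_ne_zero).prodMap (mul_right_injective₀ two_ne_zero)

theorem hasSum_even_even {𝕜 : Type*} [Field 𝕜] [CharZero 𝕜] [TopologicalSpace 𝕜]
    [IsTopologicalRing 𝕜] {c : ℕ × ℕ → 𝕜} {F : 𝕜 → 𝕜 → 𝕜} {x y : 𝕜}
    (hF : ∀ x' ∈ ({x, -x} : Set 𝕜), ∀ y' ∈ ({y, -y} : Set 𝕜),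
      HasSum (fun p => c p * x' ^ p.1 * y' ^ p.2) (F x' y')) :
    HasSum (fun p : ℕ × ℕ => c (2 * p.1, 2 * p.2) * x ^ (2 * p.1) * y ^ (2 * p.2))
      ((F x y + F (-x) y + F x (-y) + F (-x) (-y)) / 4) := by
  have h := ((((hF x (by simp) y (by simp)).add (hF (-x) (by simp) y (by simp))).add
    (hF x (by simp) (-y) (by simp))).add (hF (-x) (by simp) (-y) (by simp))).div_const 4
  rw [← injective_two_mul_prod.hasSum_iff] at h
  · refine h.congr_fun fun p => ?_
    simp only [Function.comp, (even_two_mul _).neg_pow]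
    ring
  · rintro ⟨i, j⟩ hij
    rcases Nat.even_or_odd i with ⟨m, rfl⟩ | hi
    · rcases Nat.even_or_odd j with ⟨n, rfl⟩ | hj
      · exact absurd ⟨(m, n), by simp [two_mul]⟩ hij
      · simp only [(Even.add_self m).neg_pow, hj.neg_pow]
        ring
    · simp only [hi.neg_pow]
      ring

theorem natCast_add_one_le_mul_pow {r : ℝ} (hr : 1 < r) (n : ℕ) :
    (n + 1 : ℝ) ≤ r / (r - 1) * r ^ n := by
  have hr0 : 0 < r - 1 := by linarith
  have hbernoulli : 1 + (n + 1) * (r - 1) ≤ r ^ (n + 1) := by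
    simpa using one_add_mul_le_pow (a := r - 1) (by linarith) (n + 1)
  rw [div_mul_eq_mul_div, le_div_iff₀ hr0, ← pow_succ']
  linarith

theorem summable_abs_mul_of_summable_mul_pow {c : ℕ × ℕ → ℝ} {r : ℝ} (hr : 1 < r)
    (h : Summable fun p => c p * r ^ p.1 * r ^ p.2) :
    Summable fun p => |c p| * ((p.1 + 1) * (p.2 + 1)) := by
  have : 0 < r - 1 := by linarith
  refine (h.abs.mul_left ((r / (r - 1)) ^ 2)).of_nonneg_of_le (fun p => by positivity) fun p => ?_
  calc |c p| * ((p.1 + 1) * (p.2 + 1))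
      ≤ |c p| * ((r / (r - 1) * r ^ p.1) * (r / (r - 1) * r ^ p.2)) := by
        gcongr <;> exact natCast_add_one_le_mul_pow hr _
    _ = (r / (r - 1)) ^ 2 * |c p * r ^ p.1 * r ^ p.2| := by
        rw [abs_mul, abs_mul, abs_of_nonneg (by positivity : 0 ≤ r ^ p.1),
          abs_of_nonneg (by positivity : 0 ≤ r ^ p.2)]
        ring

/-! ### The compensated moments of `Π_ν` -/

theorem integral_Ioc_comp_sq {E : Type*} [NormedAddCommGroup E] [NormedSpace ℝ E] (g : ℝ → E) :
    ∫ u in Ioc (0 : ℝ) 1, (2 * u) • g (u ^ 2) = ∫ x in Ioc (0 : ℝ) 1, g x := by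
  have himage : (fun u : ℝ => u ^ 2) '' Ioc 0 1 = Ioc 0 1 := by
    ext x
    constructor
    · rintro ⟨u, hu, rfl⟩
      exact ⟨pow_pos hu.1 2, pow_le_one₀ hu.1.le hu.2⟩
    · exact fun hx => ⟨√x, ⟨sqrt_pos.2 hx.1, sqrt_le_one.2 hx.2⟩, sq_sqrt hx.1.le⟩
  have hinj : InjOn (fun u : ℝ => u ^ 2) (Ioc 0 1) := fun u hu v hv huv =>
    (pow_left_inj₀ hu.1.le hv.1.le two_ne_zero).1 huv
  have hchange := integral_image_eq_integral_abs_deriv_smul measurableSet_Ioc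
    (fun u _ => by simpa using (hasDerivAt_pow 2 u).hasDerivWithinAt) hinj g
  rw [himage] at hchange
  rw [hchange]
  refine setIntegral_congr_fun measurableSet_Ioc fun u hu => ?_
  simp only [abs_of_pos (mul_pos two_pos hu.1)]

theorem integral_rpow_mul_one_sub_rpow {a b : ℝ} (ha : 0 < a) (hb : 0 < b) :
    ∫ x in Ioc (0 : ℝ) 1, x ^ (a - 1) * (1 - x) ^ (b - 1) = ProbabilityTheory.beta a b := by
  rw [ProbabilityTheory.beta_eq_betaIntegralReal a b ha hb, Complex.betaIntegral,
    intervalIntegral.integral_of_le zero_le_one, ← Complex.ofReal_re (∫ x in Ioc (0 : ℝ) 1, _),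
    ← integral_complex_ofReal]
  congr 1
  refine setIntegral_congr_fun measurableSet_Ioc fun x hx => ?_
  simp only [Complex.ofReal_mul]
  rw [Complex.ofReal_cpow hx.1.le, Complex.ofReal_cpow (by linarith [hx.2])]
  push_cast
  rfl

theorem two_mul_integral_pow_mul_one_sub_sq_rpow {b : ℝ} (hb : 0 < b) (n : ℕ) :
    2 * ∫ u in Ioc (0 : ℝ) 1, u ^ (2 * n) * (1 - u ^ 2) ^ (b - 1) =
      ProbabilityTheory.beta (1 / 2 + n) b := by
  rw [← integral_rpow_mul_one_sub_rpow (by positivity) hb,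
    ← integral_Ioc_comp_sq fun x => x ^ (1 / 2 + n - 1 : ℝ) * (1 - x) ^ (b - 1),
    ← integral_const_mul]
  refine setIntegral_congr_fun measurableSet_Ioc fun u hu => ?_
  have hpow : u * (u ^ 2) ^ (1 / 2 + n - 1 : ℝ) = u ^ (2 * n) := by
    rw [← rpow_natCast u 2, ← rpow_mul hu.1.le, mul_comm, ← rpow_add_one hu.1.ne',
      ← rpow_natCast]
    congr 1
    push_cast
    ring
  simp only [smul_eq_mul]
  rw [← hpow]
  ring

theorem integrableOn_one_sub_sq_rpow {a : ℝ} (ha : -1 < a) :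
    IntegrableOn (fun u : ℝ => (1 - u ^ 2) ^ a) (Ioc 0 1) := by
  -- A non-integrable function would have integral `0`, but this one has a positive Beta integral.
  refine Integrable.of_integral_ne_zero fun h0 => ?_
  have hbeta := two_mul_integral_pow_mul_one_sub_sq_rpow (b := a + 1) (by linarith) 0
  have hpos := ProbabilityTheory.beta_pos (α := 1 / 2 + (0 : ℕ)) (β := a + 1) (by norm_num)
    (by linarith)
  rw [← hbeta] at hpos
  simp [h0] at hpos

/-- The normalizing constant of `Π_ν`; it is `0` at `ν = -1/2`, as `Gamma 0 = 0` by convention. -/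
noncomputable def piConst (ν : ℝ) : ℝ :=
  Gamma (ν + 1) / (√π * Gamma (ν + 1 / 2))

/-- The Lebesgue density of `Π_ν` for `ν ≠ -1/2`. -/
noncomputable def piDensity (ν u : ℝ) : ℝ :=
  piConst ν * (1 - u ^ 2) ^ (ν - 1 / 2)

/-- The moment of order `2 n` of `Π_ν`, continued analytically to all `ν > -1`. -/
noncomputable def piMoment (ν : ℝ) (n : ℕ) : ℝ :=
  (ascPochhammer ℝ n).eval (1 / 2) / (ascPochhammer ℝ n).eval (ν + 1)

/-- The integral of `1 - u ^ 2` over `(0, 1]` against the total variation of `Π_ν`. -/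
noncomputable def piVariation (ν : ℝ) : ℝ :=
  ∫ u in Ioc (0 : ℝ) 1, ‖(1 - u ^ 2) * piDensity ν u‖

theorem one_sub_sq_mul_piDensity (ν : ℝ) {u : ℝ} (hu : u ∈ Ioo (0 : ℝ) 1) :
    (1 - u ^ 2) * piDensity ν u = piConst ν * (1 - u ^ 2) ^ (ν + 1 / 2) := by
  have hpos : 0 < 1 - u ^ 2 := by nlinarith [hu.1, hu.2]
  rw [piDensity, show ν + 1 / 2 = ν - 1 / 2 + 1 by ring, rpow_add_one hpos.ne']
  ring

theorem piConst_mul_beta {ν : ℝ} (hν : -1 < ν) (n : ℕ) :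
    piConst ν * ProbabilityTheory.beta (1 / 2 + n) (ν + 1 / 2 + 1) =
      piMoment ν n - piMoment ν (n + 1) := by
  have hratio : Gamma (ν + 1 / 2 + 1) / Gamma (ν + 1 / 2) = ν + 1 / 2 :=
    Gamma_add_one_div_Gamma fun m h => by linarith [(Nat.cast_nonneg m : (0 : ℝ) ≤ m)]
  have hν0 : 0 < ν + 1 := by linarith
  have hsum : (1 / 2 + n : ℝ) + (ν + 1 / 2 + 1) = ν + 1 + (n + 1 : ℕ) := by
    push_cast
    ring
  have hΓ := Gamma_pos_of_pos hν0
  have hpoch := ascPochhammer_pos n (ν + 1) hν0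
  have : 0 < ν + 1 + n := by positivity
  calc piConst ν * ProbabilityTheory.beta (1 / 2 + n) (ν + 1 / 2 + 1)
      = Gamma (ν + 1) * (Gamma (1 / 2 + n) / √π) *
          (Gamma (ν + 1 / 2 + 1) / Gamma (ν + 1 / 2)) / Gamma (ν + 1 + (n + 1 : ℕ)) := by
        rw [piConst, ProbabilityTheory.beta, hsum]
        ring
    _ = (ascPochhammer ℝ n).eval (1 / 2) * (ν + 1 / 2) /
          (ascPochhammer ℝ (n + 1)).eval (ν + 1) := by
        rw [hratio, Gamma_add_natCast one_half_pos, Gamma_add_natCast hν0, Gamma_one_half_eq,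
          mul_div_cancel_right₀ _ (sqrt_ne_zero'.2 pi_pos), mul_assoc, mul_comm,
          mul_div_mul_right _ _ hΓ.ne']
    _ = piMoment ν n - piMoment ν (n + 1) := by
        simp only [piMoment, ascPochhammer_succ_eval]
        field_simp
        ring

theorem integrableOn_one_sub_sq_mul_piDensity {ν : ℝ} (hν : -1 < ν) :
    IntegrableOn (fun u => (1 - u ^ 2) * piDensity ν u) (Ioc 0 1) := by
  rw [integrableOn_Ioc_iff_integrableOn_Ioo,
    integrableOn_congr_fun (fun u hu => one_sub_sq_mul_piDensity ν hu) measurableSet_Ioo]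
  exact IntegrableOn.mono_set ((integrableOn_one_sub_sq_rpow (by linarith)).const_mul _)
    Ioo_subset_Ioc_self

theorem two_mul_integral_pow_mul_one_sub_sq_mul_piDensity {ν : ℝ} (hν : -1 < ν) (n : ℕ) :
    2 * ∫ u in Ioc (0 : ℝ) 1, u ^ (2 * n) * ((1 - u ^ 2) * piDensity ν u) =
      piMoment ν n - piMoment ν (n + 1) := by
  rw [← piConst_mul_beta hν, ← two_mul_integral_pow_mul_one_sub_sq_rpow (by linarith) n,
    mul_left_comm, ← integral_const_mul (piConst ν), integral_Ioc_eq_integral_Ioo,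
    integral_Ioc_eq_integral_Ioo]
  congr 1
  refine setIntegral_congr_fun measurableSet_Ioo fun u hu => ?_
  simp only [one_sub_sq_mul_piDensity ν hu, add_sub_cancel_right]
  ring

theorem abs_pow_two_mul_sub_one_le {u : ℝ} (hu : |u| ≤ 1) (n : ℕ) :
    |u ^ (2 * n) - 1| ≤ n * (1 - u ^ 2) := by
  have hsq : u ^ 2 ≤ 1 := (sq_le_one_iff_abs_le_one u).2 hu
  have hle : (u ^ 2) ^ n ≤ 1 := pow_le_one₀ (sq_nonneg u) hsq
  have hbernoulli := one_add_mul_le_pow (a := u ^ 2 - 1) (by linarith [sq_nonneg u]) n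
  rw [add_sub_cancel] at hbernoulli
  rw [pow_mul, abs_sub_comm, abs_of_nonneg (by linarith)]
  linarith

theorem norm_pow_sub_one_mul_piDensity_le (ν : ℝ) {u : ℝ} (hu : |u| ≤ 1) (n : ℕ) :
    ‖(u ^ (2 * n) - 1) * piDensity ν u‖ ≤ n * ‖(1 - u ^ 2) * piDensity ν u‖ := by
  have hsq : 0 ≤ 1 - u ^ 2 := sub_nonneg.2 ((sq_le_one_iff_abs_le_one u).2 hu)
  rw [norm_mul, norm_mul, norm_of_nonneg hsq, ← mul_assoc]
  gcongr
  exact abs_pow_two_mul_sub_one_le hu n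

theorem abs_le_one_of_mem_Ioc {u : ℝ} (hu : u ∈ Ioc (0 : ℝ) 1) : |u| ≤ 1 :=
  (abs_of_pos hu.1).trans_le hu.2

theorem integrableOn_pow_sub_one_mul_piDensity {ν : ℝ} (hν : -1 < ν) (n : ℕ) :
    IntegrableOn (fun u => (u ^ (2 * n) - 1) * piDensity ν u) (Ioc 0 1) := by
  refine ((integrableOn_one_sub_sq_mul_piDensity hν).norm.const_mul (n : ℝ)).mono'
    (by unfold piDensity; fun_prop) ?_
  filter_upwards [ae_restrict_mem measurableSet_Ioc] with u hu
  exact norm_pow_sub_one_mul_piDensity_le ν (abs_le_one_of_mem_Ioc hu) n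

theorem integral_norm_pow_sub_one_mul_piDensity_le {ν : ℝ} (hν : -1 < ν) (n : ℕ) :
    ∫ u in Ioc (0 : ℝ) 1, ‖(u ^ (2 * n) - 1) * piDensity ν u‖ ≤ n * piVariation ν := by
  rw [piVariation, ← integral_const_mul]
  exact setIntegral_mono_on (integrableOn_pow_sub_one_mul_piDensity hν n).norm
    ((integrableOn_one_sub_sq_mul_piDensity hν).norm.const_mul _) measurableSet_Ioc
    fun u hu => norm_pow_sub_one_mul_piDensity_le ν (abs_le_one_of_mem_Ioc hu) n

theorem two_mul_integral_pow_sub_one_mul_piDensity {ν : ℝ} (hν : -1 < ν) (n : ℕ) :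
    2 * ∫ u in Ioc (0 : ℝ) 1, (u ^ (2 * n) - 1) * piDensity ν u = piMoment ν n - 1 := by
  induction n with
  | zero => simp [piMoment]
  | succ n ih =>
    have htelescope : (∫ u in Ioc (0 : ℝ) 1, (u ^ (2 * n) - 1) * piDensity ν u) -
        (∫ u in Ioc (0 : ℝ) 1, (u ^ (2 * (n + 1)) - 1) * piDensity ν u) =
        ∫ u in Ioc (0 : ℝ) 1, u ^ (2 * n) * ((1 - u ^ 2) * piDensity ν u) := by
      rw [← integral_sub (integrableOn_pow_sub_one_mul_piDensity hν n)
        (integrableOn_pow_sub_one_mul_piDensity hν (n + 1))]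
      congr 1 with u
      ring
    linarith [two_mul_integral_pow_mul_one_sub_sq_mul_piDensity hν n]

theorem abs_piMoment_sub_one_le {ν : ℝ} (hν : -1 < ν) (n : ℕ) :
    |piMoment ν n - 1| ≤ 2 * piVariation ν * n := by
  rw [← two_mul_integral_pow_sub_one_mul_piDensity hν, abs_mul, abs_two, mul_assoc,
    mul_comm (piVariation ν)]
  gcongr
  exact (norm_integral_le_integral_norm _).trans (integral_norm_pow_sub_one_mul_piDensity_le hν n)

/-! ### Termwise integration of even power series -/

-- If `ν = -1/2` both sides vanish: `f` does not see the atoms of `Π_ν`, and `piDensity ν` is `0`.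
theorem PiInt_eq_setIntegral (ν : ℝ) {f : ℝ → ℝ} (hf : f 1 = 0) :
    PiInt ν (Ioc 0 1) f = ∫ u in Ioc 0 1, f u * piDensity ν u := by
  by_cases hν : ν = -(1 / 2)
  · simp [PiInt, piDensity, piConst, hν, hf, Gamma_zero]
  · simp only [PiInt, if_neg hν, piDensity, piConst]

theorem PiInt_const_mul (ν : ℝ) (S : Set ℝ) (c : ℝ) (f : ℝ → ℝ) :
    PiInt ν S (fun u => c * f u) = c * PiInt ν S f := by
  by_cases hν : ν = -(1 / 2)
  · simp only [PiInt, if_pos hν]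
    split_ifs <;> ring
  · simp only [PiInt, if_neg hν, mul_assoc, integral_const_mul]

theorem hasSum_two_mul_PiInt {ι : Type*} [Countable ι] {ν : ℝ} (hν : -1 < ν) {b : ι → ℝ}
    {e : ι → ℕ} {f : ℝ → ℝ} (hb : Summable fun i => |b i| * e i)
    (hf : ∀ u ∈ Ioc (0 : ℝ) 1, HasSum (fun i => b i * (u ^ (2 * e i) - 1)) (f u)) :
    HasSum (fun i => b i * (piMoment ν (e i) - 1)) (2 * PiInt ν (Ioc 0 1) f) := by
  have hf1 : f 1 = 0 := (hf 1 (by simp)).unique (by simp [hasSum_zero])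
  have hint (i : ι) := (integrableOn_pow_sub_one_mul_piDensity hν (e i)).const_mul (b i)
  have hnorm : Summable fun i =>
      ∫ u in Ioc (0 : ℝ) 1, ‖b i * ((u ^ (2 * e i) - 1) * piDensity ν u)‖ := by
    refine (hb.mul_right (piVariation ν)).of_nonneg_of_le
      (fun i => integral_nonneg fun _ => norm_nonneg _) fun i => ?_
    simp_rw [norm_mul (b i)]
    rw [integral_const_mul, norm_eq_abs, mul_assoc]
    gcongr
    exact integral_norm_pow_sub_one_mul_piDensity_le hν (e i)
  have htsum : (∫ u in Ioc (0 : ℝ) 1, ∑' i, b i * ((u ^ (2 * e i) - 1) * piDensity ν u)) =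
      PiInt ν (Ioc 0 1) f := by
    rw [PiInt_eq_setIntegral ν hf1]
    refine setIntegral_congr_fun measurableSet_Ioc fun u hu => ?_
    simpa only [mul_assoc] using ((hf u hu).mul_right (piDensity ν u)).tsum_eq
  have h := (hasSum_integral_of_summable_integral_norm hint hnorm).mul_left 2
  rw [htsum] at h
  refine h.congr_fun fun i => ?_
  rw [integral_const_mul, mul_left_comm, two_mul_integral_pow_sub_one_mul_piDensity hν]

section TwoVariables

variable {α β : ℝ} {a : ℕ × ℕ → ℝ} {E : ℝ → ℝ → ℝ}

theorem hasSum_four_mul_PiInt_PiInt (hα : -1 < α) (hβ : -1 < β)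
    (ha : Summable fun p => |a p| * ((p.1 + 1) * (p.2 + 1)))
    (hE : ∀ u ∈ Ioc (0 : ℝ) 1, ∀ v ∈ Ioc (0 : ℝ) 1,
      HasSum (fun p => a p * u ^ (2 * p.1) * v ^ (2 * p.2)) (E u v)) :
    HasSum (fun p => a p * (piMoment β p.2 - 1) * (piMoment α p.1 - 1))
      (4 * PiInt α (Ioc 0 1) fun u => PiInt β (Ioc 0 1) fun v =>
        E u v - E u 1 - E 1 v + E 1 1) := by
  have h1 : (1 : ℝ) ∈ Ioc (0 : ℝ) 1 := by norm_num
  have hinner (u : ℝ) (hu : u ∈ Ioc (0 : ℝ) 1) :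
      HasSum (fun p : ℕ × ℕ => a p * (u ^ (2 * p.1) - 1) * (piMoment β p.2 - 1))
        (2 * PiInt β (Ioc 0 1) fun v => E u v - E u 1 - E 1 v + E 1 1) := by
    refine hasSum_two_mul_PiInt hβ (b := fun p : ℕ × ℕ => a p * (u ^ (2 * p.1) - 1))
      (ha.of_nonneg_of_le (fun p => by positivity) fun p => ?_) fun v hv => ?_
    · have hsq : |u ^ (2 * p.1) - 1| ≤ p.1 + 1 :=
        (abs_pow_two_mul_sub_one_le (abs_le_one_of_mem_Ioc hu) _).trans
          (by nlinarith [sq_nonneg u, (Nat.cast_nonneg p.1 : (0 : ℝ) ≤ p.1)])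
      rw [abs_mul, mul_assoc]
      gcongr
      linarith
    · refine ((((hE u hu v hv).sub (hE u hu 1 h1)).sub (hE 1 h1 v hv)).add
        (hE 1 h1 1 h1)).congr_fun fun p => ?_
      simp only [one_pow]
      ring
  have hsummable : Summable fun p : ℕ × ℕ => |a p * (piMoment β p.2 - 1)| * p.1 := by
    refine (ha.mul_left (2 * piVariation β)).of_nonneg_of_le (fun p => by positivity) fun p => ?_
    have hvar : 0 ≤ piVariation β := integral_nonneg fun _ => norm_nonneg _
    calc |a p * (piMoment β p.2 - 1)| * p.1
        ≤ |a p| * (2 * piVariation β * (p.2 + 1)) * (p.1 + 1) := by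
          rw [abs_mul]
          gcongr
          · exact (abs_piMoment_sub_one_le hβ p.2).trans (by gcongr; linarith)
          · linarith
      _ = 2 * piVariation β * (|a p| * ((p.1 + 1) * (p.2 + 1))) := by ring
  have houter := hasSum_two_mul_PiInt hα hsummable fun u hu =>
    (hinner u hu).congr_fun fun p => mul_right_comm _ _ _
  rwa [PiInt_const_mul, ← mul_assoc, show (2 : ℝ) * 2 = 4 by norm_num] at houter

theorem hasSum_compensated_PiInt (hα : -1 < α) (hβ : -1 < β)
    (ha : Summable fun p => |a p| * ((p.1 + 1) * (p.2 + 1)))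
    (hE : ∀ u ∈ Ioc (0 : ℝ) 1, ∀ v ∈ Ioc (0 : ℝ) 1,
      HasSum (fun p => a p * u ^ (2 * p.1) * v ^ (2 * p.2)) (E u v)) :
    HasSum (fun p => a p * piMoment α p.1 * piMoment β p.2)
      (4 * PiInt α (Ioc 0 1) (fun u => PiInt β (Ioc 0 1) fun v =>
          E u v - E u 1 - E 1 v + E 1 1)
        + 2 * PiInt α (Ioc 0 1) (fun u => E u 1 - E 1 1)
        + 2 * PiInt β (Ioc 0 1) (fun v => E 1 v - E 1 1) + E 1 1) := by
  have h1 : (1 : ℝ) ∈ Ioc (0 : ℝ) 1 := by norm_num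
  have hfst : Summable fun p => |a p| * (p.1 : ℝ) := by
    refine ha.of_nonneg_of_le (fun p => by positivity) fun p => ?_
    gcongr
    nlinarith [(Nat.cast_nonneg p.1 : (0 : ℝ) ≤ p.1), (Nat.cast_nonneg p.2 : (0 : ℝ) ≤ p.2)]
  have hsnd : Summable fun p => |a p| * (p.2 : ℝ) := by
    refine ha.of_nonneg_of_le (fun p => by positivity) fun p => ?_
    gcongr
    nlinarith [(Nat.cast_nonneg p.1 : (0 : ℝ) ≤ p.1), (Nat.cast_nonneg p.2 : (0 : ℝ) ≤ p.2)]
  have hEu := hasSum_two_mul_PiInt hα (f := fun u => E u 1 - E 1 1) hfst fun u hu =>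
    ((hE u hu 1 h1).sub (hE 1 h1 1 h1)).congr_fun fun p => by simp only [one_pow]; ring
  have hEv := hasSum_two_mul_PiInt hβ (f := fun v => E 1 v - E 1 1) hsnd fun v hv =>
    ((hE 1 h1 v hv).sub (hE 1 h1 1 h1)).congr_fun fun p => by simp only [one_pow]; ring
  refine ((((hasSum_four_mul_PiInt_PiInt hα hβ ha hE).add hEu).add hEv).add
    (hE 1 h1 1 h1)).congr_fun fun p => ?_
  simp only [one_pow]
  ring

end TwoVariables

/-! ### The Jacobi-Poisson kernel -/

/-- The square root of the first argument of `F4` in `Hker`. -/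
noncomputable def sinArg (t θ φ : ℝ) : ℝ :=
  sin (θ / 2) * sin (φ / 2) / cosh (t / 2)

/-- The square root of the second argument of `F4` in `Hker`. -/
noncomputable def cosArg (t θ φ : ℝ) : ℝ :=
  cos (θ / 2) * cos (φ / 2) / cosh (t / 2)

/-- The Taylor coefficients at the origin of `Psi` in the variables `u` and `v`. -/
noncomputable def psiCoeff (α β t θ φ : ℝ) (p : ℕ × ℕ) : ℝ :=
  cab α β * sinh (t / 2) / cosh (t / 2) ^ (α + β + 2) *
    (negBinomialCoeff (α + β + 2) p * sinArg t θ φ ^ p.1 * cosArg t θ φ ^ p.2)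

theorem abs_sinArg_add_abs_cosArg_lt_one {t : ℝ} (ht : t ≠ 0) (θ φ : ℝ) :
    |sinArg t θ φ| + |cosArg t θ φ| < 1 := by
  have hcosh : 1 < cosh (t / 2) := one_lt_cosh.2 (by simpa using ht)
  have hmul (x y : ℝ) : |x * y| ≤ (x ^ 2 + y ^ 2) / 2 := by
    rw [abs_mul, ← sq_abs x, ← sq_abs y]
    linarith [two_mul_le_add_sq |x| |y|]
  rw [sinArg, cosArg, abs_div, abs_div, abs_of_pos (cosh_pos _), ← add_div,
    div_lt_one (cosh_pos _)]
  linarith [hmul (sin (θ / 2)) (sin (φ / 2)), hmul (cos (θ / 2)) (cos (φ / 2)),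
    sin_sq_add_cos_sq (θ / 2), sin_sq_add_cos_sq (φ / 2)]

theorem Psi_eq_mul_one_div {α β t θ φ u v : ℝ}
    (h : 0 ≤ 1 - u * sinArg t θ φ - v * cosArg t θ φ) :
    Psi α β t θ φ u v = cab α β * sinh (t / 2) / cosh (t / 2) ^ (α + β + 2) *
      (1 / (1 - u * sinArg t θ φ - v * cosArg t θ φ) ^ (α + β + 2)) := by
  have hcosh := cosh_pos (t / 2)
  rw [Psi, div_mul_div_comm, mul_one, ← mul_rpow hcosh.le h, qf, sinArg, cosArg]
  congr 2
  field_simp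
  ring

theorem hasSum_Psi (α β : ℝ) {t θ φ u v : ℝ} (h : |u * sinArg t θ φ| + |v * cosArg t θ φ| < 1) :
    HasSum (fun p : ℕ × ℕ => psiCoeff α β t θ φ p * u ^ p.1 * v ^ p.2) (Psi α β t θ φ u v) := by
  have hpos : 0 ≤ 1 - u * sinArg t θ φ - v * cosArg t θ φ := by
    linarith [le_abs_self (u * sinArg t θ φ), le_abs_self (v * cosArg t θ φ)]
  rw [Psi_eq_mul_one_div hpos]
  refine ((hasSum_negBinomialCoeff (α + β + 2) h).mul_left _).congr_fun fun p => ?_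
  rw [psiCoeff]
  ring

theorem hasSum_PsiE (α β : ℝ) {t : ℝ} (ht : t ≠ 0) (θ φ : ℝ) {u v : ℝ} (hu : |u| ≤ 1)
    (hv : |v| ≤ 1) :
    HasSum (fun p : ℕ × ℕ => psiCoeff α β t θ φ (2 * p.1, 2 * p.2) * u ^ (2 * p.1) *
      v ^ (2 * p.2)) (PsiE α β t θ φ u v) := by
  refine hasSum_even_even fun u' hu' v' hv' => hasSum_Psi α β ?_
  have hu1 : |u'| ≤ 1 := by rcases hu' with rfl | rfl <;> simpa using hu
  have hv1 : |v'| ≤ 1 := by rcases hv' with rfl | rfl <;> simpa using hv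
  rw [abs_mul, abs_mul]
  exact (add_le_add (mul_le_of_le_one_left (abs_nonneg _) hu1)
    (mul_le_of_le_one_left (abs_nonneg _) hv1)).trans_lt (abs_sinArg_add_abs_cosArg_lt_one ht θ φ)

theorem summable_abs_psiCoeff_mul (α β : ℝ) {t : ℝ} (ht : t ≠ 0) (θ φ : ℝ) :
    Summable fun p : ℕ × ℕ => |psiCoeff α β t θ φ p| * ((p.1 + 1) * (p.2 + 1)) := by
  set s := |sinArg t θ φ| + |cosArg t θ φ|
  have hs0 : 0 ≤ s := by positivity
  have hs1 : s < 1 := abs_sinArg_add_abs_cosArg_lt_one ht θ φ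
  obtain ⟨r, hr, hrs⟩ : ∃ r : ℝ, 1 < r ∧ r * s < 1 := by
    refine ⟨2 / (1 + s), ?_, ?_⟩
    · rw [one_lt_div] <;> linarith
    · rw [div_mul_eq_mul_div, div_lt_one] <;> linarith
  refine summable_abs_mul_of_summable_mul_pow hr (hasSum_Psi α β ?_).summable
  rwa [abs_mul, abs_mul, ← mul_add, abs_of_pos (by linarith)]

theorem summable_abs_psiCoeff_two_mul_mul (α β : ℝ) {t : ℝ} (ht : t ≠ 0) (θ φ : ℝ) :
    Summable fun p : ℕ × ℕ =>
      |psiCoeff α β t θ φ (2 * p.1, 2 * p.2)| * ((p.1 + 1) * (p.2 + 1)) := by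
  refine ((summable_abs_psiCoeff_mul α β ht θ φ).comp_injective
    injective_two_mul_prod).of_nonneg_of_le (fun p => by positivity) fun p => ?_
  simp only [Function.comp]
  gcongr <;> omega

theorem negBinomialCoeff_two_mul_mul_piMoment (a α β : ℝ) (p : ℕ × ℕ) :
    negBinomialCoeff a (2 * p.1, 2 * p.2) * piMoment α p.1 * piMoment β p.2 =
      ((ascPochhammer ℝ (p.1 + p.2)).eval (a / 2) *
        (ascPochhammer ℝ (p.1 + p.2)).eval ((a + 1) / 2)) /
      ((ascPochhammer ℝ p.1).eval (α + 1) * (ascPochhammer ℝ p.2).eval (β + 1) *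
        p.1.factorial * p.2.factorial) := by
  have h1 := (ascPochhammer_pos p.1 (1 / 2 : ℝ) one_half_pos).ne'
  have h2 := (ascPochhammer_pos p.2 (1 / 2 : ℝ) one_half_pos).ne'
  simp only [negBinomialCoeff, piMoment, ← mul_add, ascPochhammer_eval_two_mul,
    cast_factorial_two_mul, pow_add]
  field_simp

theorem Hker_eq_tsum (α β t θ φ : ℝ) :
    Hker α β t θ φ = ∑' p : ℕ × ℕ,
      psiCoeff α β t θ φ (2 * p.1, 2 * p.2) * piMoment α p.1 * piMoment β p.2 := by
  rw [Hker, F4, ← tsum_mul_left]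
  refine tsum_congr fun p => ?_
  rw [show (α + β + 3) / 2 = (α + β + 2 + 1) / 2 by ring,
    ← negBinomialCoeff_two_mul_mul_piMoment, ← pow_mul, ← pow_mul, psiCoeff, sinArg, cosArg]
  ring

theorem jacobi_poisson_kernel_general_representation_general
    (α β : ℝ) (hα : -1 < α) (hβ : -1 < β) (t : ℝ) (ht : t ≠ 0) (θ φ : ℝ) :
    Hker α β t θ φ =
      4 * PiInt α (Ioc 0 1) (fun u => PiInt β (Ioc 0 1) (fun v =>
            PsiE α β t θ φ u v - PsiE α β t θ φ u 1 - PsiE α β t θ φ 1 v +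
              PsiE α β t θ φ 1 1))
      + 2 * PiInt α (Ioc 0 1) (fun u => PsiE α β t θ φ u 1 - PsiE α β t θ φ 1 1)
      + 2 * PiInt β (Ioc 0 1) (fun v => PsiE α β t θ φ 1 v - PsiE α β t θ φ 1 1)
      + PsiE α β t θ φ 1 1 := by
  rw [Hker_eq_tsum]
  exact (hasSum_compensated_PiInt hα hβ (summable_abs_psiCoeff_two_mul_mul α β ht θ φ)
    fun u hu v hv => hasSum_PsiE α β ht θ φ (abs_le_one_of_mem_Ioc hu)
      (abs_le_one_of_mem_Ioc hv)).tsum_eq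

theorem jacobi_poisson_kernel_general_representation
    (α β : ℝ) (hα : -1 < α) (hβ : -1 < β) (t : ℝ) (ht : 0 < t)
    (θ φ : ℝ) (hθ : θ ∈ Icc (0 : ℝ) π) (hφ : φ ∈ Icc (0 : ℝ) π) :
    Hker α β t θ φ =
      4 * PiInt α (Ioc 0 1) (fun u => PiInt β (Ioc 0 1) (fun v =>
            PsiE α β t θ φ u v - PsiE α β t θ φ u 1 - PsiE α β t θ φ 1 v +
              PsiE α β t θ φ 1 1))
      + 2 * PiInt α (Ioc 0 1) (fun u => PsiE α β t θ φ u 1 - PsiE α β t θ φ 1 1)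
      + 2 * PiInt β (Ioc 0 1) (fun v => PsiE α β t θ φ 1 v - PsiE α β t θ φ 1 1)
      + PsiE α β t θ φ 1 1 := by
  exact jacobi_poisson_kernel_general_representation_general α β hα hβ t ht.ne' θ φ
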